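/- Let G be a basic CUH graph that omits D and in which at least one color class does not form an independent set. If ω_R > 1, then every blue vertex has both a neighbor and a non-neighbor in every maximal red clique; moreover, G[M_R ∪ M_B] ≅ G[M_R′ ∪ M_B′] for all maximal red cliques M_R, M_R′ and all maximal blue cliques M_B, M_B′. -/

import Mathlib

open SimpleGraph

/-- A partial colored isomorphism of the 2-colored graph `(G, red)`, defined on the set `S`:
an injective map preserving colors and adjacency on `S`. -/
def IsPartialIso {V : Type} (G : SimpleGraph V) (red : V → Prop) (S : Set V) (f : V → V) :
    Prop :=
  Set.InjOn f S ∧ (∀ v ∈ S, (red (f v) ↔ red v)) ∧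
    ∀ u ∈ S, ∀ v ∈ S, (G.Adj (f u) (f v) ↔ G.Adj u v)

/-- A 2-colored graph is ultrahomogeneous if every isomorphism between two finite induced
colored subgraphs extends to a color-preserving automorphism. -/
def Ultrahomogeneous {V : Type} (G : SimpleGraph V) (red : V → Prop) : Prop :=
  ∀ S : Set V, S.Finite → ∀ f : V → V, IsPartialIso G red S f →
    ∃ ψ : G ≃g G, (∀ v, red (ψ v) ↔ red v) ∧ ∀ v ∈ S, ψ v = f v

/-- The set `P` induces a disjoint union of cliques in `G` (no induced monochromatic `P₃`). -/
def IsUnionOfCliques {V : Type} (G : SimpleGraph V) (P : Set V) : Prop :=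
  ∀ u ∈ P, ∀ v ∈ P, ∀ w ∈ P, G.Adj u v → G.Adj v w → u ≠ w → G.Adj u w

/-- `M` is an inclusion-wise maximal clique of the subgraph of `G` induced on `P`. -/
def IsMaxCliqueIn {V : Type} (G : SimpleGraph V) (P : Set V) (M : Set V) : Prop :=
  M ⊆ P ∧ G.IsClique M ∧ ∀ M' : Set V, M' ⊆ P → G.IsClique M' → M ⊆ M' → M = M'

/-- `S` is an independent set in `G`. -/
def IsIndepIn {V : Type} (G : SimpleGraph V) (S : Set V) : Prop :=
  ∀ u ∈ S, ∀ v ∈ S, ¬ G.Adj u v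

/-- The 2-colored graph `(H, redH)` is realized in `(G, red)`, i.e. isomorphic to an
induced colored subgraph of `G`. -/
def Realizes {V : Type} (G : SimpleGraph V) (red : V → Prop) {W : Type} (H : SimpleGraph W)
    (redH : W → Prop) : Prop :=
  ∃ f : W → V, Function.Injective f ∧ (∀ w, red (f w) ↔ redH w) ∧
    ∀ u w : W, G.Adj (f u) (f w) ↔ H.Adj u w

/-- `(H, redH)` is minimally omitted in `(G, red)`: it is omitted, but every proper induced
subgraph of it is realized. -/
def MinOmitted {V : Type} (G : SimpleGraph V) (red : V → Prop) {W : Type} (H : SimpleGraph W)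
    (redH : W → Prop) : Prop :=
  ¬ Realizes G red H redH ∧
    ∀ S : Set W, S ≠ Set.univ → Realizes G red (H.induce S) (fun x => redH x.1)

/-- Isomorphism of 2-colored graphs. -/
def ColoredIso {V : Type} (G : SimpleGraph V) (red : V → Prop) {W : Type} (H : SimpleGraph W)
    (redH : W → Prop) : Prop :=
  ∃ e : G ≃g H, ∀ v, red v ↔ redH (e v)

/-- The graph obtained from `G` by complementing the cross edges while keeping the
edges inside each color class. -/
def crossComp {V : Type} (G : SimpleGraph V) (red : V → Prop) : SimpleGraph V :=
  SimpleGraph.fromRel (fun u v =>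
    ((red u ↔ red v) ∧ G.Adj u v) ∨ (¬ (red u ↔ red v) ∧ ¬ G.Adj u v))

/-- The blow-up of the 2-colored graph `(H, redH)` (whose red class should be independent),
replacing every red vertex by a copy of `I` forming a clique, joined to the neighbors of the
original vertex. -/
def blowUp {V : Type} (H : SimpleGraph V) (redH : V → Prop) (I : Type) :
    SimpleGraph ({v : V // redH v} × I ⊕ {v : V // ¬ redH v}) :=
  SimpleGraph.fromRel (fun x y =>
    match x, y with
    | Sum.inl (u, i), Sum.inl (u', i') => H.Adj u.1 u'.1 ∨ (u = u' ∧ i ≠ i')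
    | Sum.inl (u, _), Sum.inr b => H.Adj u.1 b.1
    | Sum.inr b, Sum.inl (u, _) => H.Adj b.1 u.1
    | Sum.inr b, Sum.inr b' => H.Adj b.1 b'.1)

/-- The coloring of the blow-up: all vertices replacing red vertices are red. -/
def blowUpRed (V : Type) (redH : V → Prop) (I : Type) :
    ({v : V // redH v} × I ⊕ {v : V // ¬ redH v}) → Prop :=
  Sum.elim (fun _ => True) (fun _ => False)

/-- `(G, red)` is a blow-up with the red class blown up: it is isomorphic (as a colored graph)
to the blow-up of some `(H, redH)` with independent red class by an `i`-clique, `2 ≤ i ≤ ℵ₀`. -/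
def IsBlowUpOf {V : Type} (G : SimpleGraph V) (red : V → Prop) : Prop :=
  ∃ (U : Type) (H : SimpleGraph U) (redH : U → Prop) (I : Type),
    (∀ u v : U, redH u → redH v → ¬ H.Adj u v) ∧
    2 ≤ Cardinal.mk I ∧ Cardinal.mk I ≤ Cardinal.aleph0 ∧
    ∃ e : G ≃g blowUp H redH I, ∀ v, red v ↔ blowUpRed U redH I (e v)

/-- `(G, red)` is a blow-up (of one of its two color classes). -/
def IsBlowUp {V : Type} (G : SimpleGraph V) (red : V → Prop) : Prop :=
  IsBlowUpOf G red ∨ IsBlowUpOf G (fun v => ¬ red v)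

/-- A CUH graph: a countably infinite ultrahomogeneous 2-colored graph in which both
color classes induce disjoint unions of cliques. -/
def IsCUH {V : Type} (G : SimpleGraph V) (red : V → Prop) : Prop :=
  Countable V ∧ Infinite V ∧ Ultrahomogeneous G red ∧
    IsUnionOfCliques G {v | red v} ∧ IsUnionOfCliques G {v | ¬ red v}

/-- A basic CUH graph: a CUH graph which is not a blow-up and where both independence
numbers are at least 2. -/
def IsBasicCUH {V : Type} (G : SimpleGraph V) (red : V → Prop) : Prop :=
  IsCUH G red ∧ ¬ IsBlowUp G red ∧
    (∃ u v, red u ∧ red v ∧ u ≠ v ∧ ¬ G.Adj u v) ∧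
    (∃ u v, ¬ red u ∧ ¬ red v ∧ u ≠ v ∧ ¬ G.Adj u v)

/-- The graph `D`: red vertices `0, 1`, blue vertices `2, 3`, edges
`{01, 23, 02, 03, 12}` (a 2-colored diamond). -/
def Dgraph : SimpleGraph (Fin 4) :=
  SimpleGraph.fromRel (fun x y =>
    (x = 0 ∧ y = 1) ∨ (x = 2 ∧ y = 3) ∨ (x = 0 ∧ y = 2) ∨ (x = 0 ∧ y = 3) ∨ (x = 1 ∧ y = 2))

/-- The coloring of `D` and `D̃`: `0, 1` are red, `2, 3` are blue. -/
def Dred : Fin 4 → Prop := fun x => x = 0 ∨ x = 1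

/-- The graph `D̃`, the cross-edge complement of `D`: the path `0 – 1 – 3 – 2`. -/
def Dtilde : SimpleGraph (Fin 4) :=
  SimpleGraph.fromRel (fun x y => (x = 0 ∧ y = 1) ∨ (x = 1 ∧ y = 3) ∨ (x = 3 ∧ y = 2))

/-- `T_r`: the triangle with two red vertices and one blue vertex. -/
def Tr : SimpleGraph (Fin 3) := ⊤

/-- The coloring of `T_r` and `T̃_r`: `0, 1` red, `2` blue. -/
def TrRed : Fin 3 → Prop := fun x => x = 0 ∨ x = 1

/-- `T̃_r`: a red edge together with an isolated blue vertex. -/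
def TrTilde : SimpleGraph (Fin 3) := SimpleGraph.fromRel (fun x y => x = 0 ∧ y = 1)

/-- `T_b`: the triangle with one red vertex and two blue vertices. -/
def Tb : SimpleGraph (Fin 3) := ⊤

/-- The coloring of `T_b` and `T̃_b`: `0` red, `1, 2` blue. -/
def TbRed : Fin 3 → Prop := fun x => x = 0

/-- `T̃_b`: a blue edge together with an isolated red vertex. -/
def TbTilde : SimpleGraph (Fin 3) := SimpleGraph.fromRel (fun x y => x = 1 ∧ y = 2)

/-- Any red vertex is mapped to any other red vertex by some color-preserving automorphism. -/
lemma Ultrahomogeneous.exists_map_red {V : Type} {G : SimpleGraph V} {red : V → Prop}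
    (h : Ultrahomogeneous G red) {u u' : V} (hu : red u) (hu' : red u') :
    ∃ ψ : G ≃g G, (∀ v, red (ψ v) ↔ red v) ∧ ψ u = u' := by
  obtain ⟨ψ, hψ, hψu⟩ := h {u} (Set.finite_singleton u) (fun _ => u')
    ⟨by simp, by simp [hu, hu'], by simp⟩
  exact ⟨ψ, hψ, hψu u rfl⟩

/-- Red-blue pairs with the same adjacency are conjugate under color-preserving
automorphisms. -/
lemma Ultrahomogeneous.exists_map_pair {V : Type} {G : SimpleGraph V} {red : V → Prop}
    (h : Ultrahomogeneous G red) {r r' b b' : V} (hr : red r) (hr' : red r') (hb : ¬ red b)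
    (hb' : ¬ red b') (hadj : G.Adj b' r' ↔ G.Adj b r) :
    ∃ ψ : G ≃g G, (∀ v, red (ψ v) ↔ red v) ∧ ψ r = r' ∧ ψ b = b' := by
  classical
  have hrb : b ≠ r := fun e => hb (e ▸ hr)
  have hrb' : b' ≠ r' := fun e => hb' (e ▸ hr')
  obtain ⟨ψ, hψ, hψS⟩ := h {r, b} (Set.toFinite _) (fun x => if x = r then r' else b') (by
    refine ⟨?_, ?_, ?_⟩
    · simp [Set.InjOn, hrb, hrb', hrb'.symm]
    · simp [hr, hr', hb, hb', hrb]
    · simp [hrb, hadj, G.adj_comm r b, G.adj_comm r' b'])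
  exact ⟨ψ, hψ, by simpa using hψS r (by simp), by simpa [hrb] using hψS b (by simp)⟩

/-- A maximal clique of a disjoint union of cliques is the closed neighborhood of each of
its members. -/
lemma IsMaxCliqueIn.mem_iff {V : Type} {G : SimpleGraph V} {P M : Set V}
    (hP : IsUnionOfCliques G P) (hM : IsMaxCliqueIn G P M) {r : V} (hr : r ∈ M) (v : V) :
    v ∈ M ↔ v ∈ P ∧ (v = r ∨ G.Adj r v) := by
  obtain ⟨hMP, hMc, hmax⟩ := hM
  constructor
  · intro hv
    refine ⟨hMP hv, ?_⟩
    by_cases e : v = r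
    · exact Or.inl e
    · exact Or.inr (hMc hr hv (Ne.symm e))
  · rintro ⟨hv, rfl | hrv⟩
    · exact hr
    · have hM' := hmax (insert v M) (Set.insert_subset hv hMP)
        (SimpleGraph.isClique_insert.2 ⟨hMc, fun w hw hvw => ?_⟩) (Set.subset_insert v M)
      · rw [hM']
        exact Set.mem_insert v M
      · by_cases e : w = r
        · exact e ▸ hrv.symm
        · exact hP v hv r (hMP hr) w (hMP hw) hrv.symm (hMc hr hw (Ne.symm e)) hvw

/-- Closed neighborhoods inside a disjoint union of cliques are maximal cliques. -/
lemma IsUnionOfCliques.isMaxCliqueIn {V : Type} {G : SimpleGraph V} {P : Set V}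
    (hP : IsUnionOfCliques G P) {r : V} (hr : r ∈ P) :
    IsMaxCliqueIn G P {v | v ∈ P ∧ (v = r ∨ G.Adj r v)} := by
  refine ⟨fun v hv => hv.1, ?_, fun M' hM'P hM'c hsub => hsub.antisymm fun v hv => ?_⟩
  · rintro u ⟨hu, rfl | hur⟩ v ⟨hv, rfl | hvr⟩ huv
    · exact absurd rfl huv
    · exact hvr
    · exact hur.symm
    · exact hP u hu r hr v hv hur.symm hvr huv
  · refine ⟨hM'P hv, ?_⟩
    by_cases e : v = r
    · exact Or.inl e
    · exact Or.inr (hM'c (hsub ⟨hr, Or.inl rfl⟩) hv (Ne.symm e))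

/-- A maximal clique inside a nonempty set is nonempty. -/
lemma IsMaxCliqueIn.nonempty {V : Type} {G : SimpleGraph V} {P M : Set V}
    (hM : IsMaxCliqueIn G P M) (hP : P.Nonempty) : M.Nonempty := by
  obtain ⟨v, hv⟩ := hP
  by_contra hne
  rw [Set.not_nonempty_iff_eq_empty] at hne
  have := hM.2.2 {v} (by simpa using hv) (by simp) (by simp [hne])
  exact Set.singleton_ne_empty v (this.symm.trans hne)

/-- Color-preserving automorphisms map maximal cliques onto maximal cliques. -/
lemma IsMaxCliqueIn.mem_map_iff {V : Type} {G : SimpleGraph V} {P M M' : Set V}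
    (hP : IsUnionOfCliques G P) (hM : IsMaxCliqueIn G P M) (hM' : IsMaxCliqueIn G P M')
    (ψ : G ≃g G) (hψ : ∀ v, ψ v ∈ P ↔ v ∈ P) {r : V} (hr : r ∈ M) (hr' : ψ r ∈ M') (v : V) :
    ψ v ∈ M' ↔ v ∈ M := by
  rw [hM.mem_iff hP hr, hM'.mem_iff hP hr', hψ, ψ.map_adj_iff, ψ.injective.eq_iff]

/-- If adjacent red vertices are twins towards the blue class and red cliques are nontrivial,
the graph is a blow-up. -/
lemma isBlowUpOf_of_twins {V : Type} {G : SimpleGraph V} {red : V → Prop} [Countable V]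
    (hU : Ultrahomogeneous G red) (hR : IsUnionOfCliques G {v | red v}) {r : V} (hr : red r)
    (hcard : ∀ M : Set V, IsMaxCliqueIn G {v | red v} M → 1 < Cardinal.mk M)
    (htwin : ∀ b, ¬ red b → ∀ u v, red u → red v → G.Adj u v → G.Adj b u → G.Adj b v) :
    IsBlowUpOf G red := by
  classical
  let S : Setoid V :=
    { r := fun u v => u = v ∨ (G.Adj u v ∧ red u ∧ red v)
      iseqv :=
        { refl := fun _ => Or.inl rfl
          symm := by
            rintro u v (rfl | ⟨h, hu, hv⟩)
            · exact Or.inl rfl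
            · exact Or.inr ⟨h.symm, hv, hu⟩
          trans := by
            rintro u v w (rfl | ⟨h, hu, hv⟩) (rfl | ⟨h', hv', hw⟩)
            · exact Or.inl rfl
            · exact Or.inr ⟨h', hv', hw⟩
            · exact Or.inr ⟨h, hu, hv⟩
            · by_cases e : u = w
              · exact Or.inl e
              · exact Or.inr ⟨hR u hu v hv w hw h h' e, hu, hw⟩ } }
  let C : Set V := {v | v ∈ {v | red v} ∧ (v = r ∨ G.Adj r v)}
  let ρ : V → V := fun v => (Quotient.mk S v).out
  have hρ : ∀ v, ρ v = v ∨ (G.Adj (ρ v) v ∧ red (ρ v) ∧ red v) := fun v =>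
    Quotient.exact (Quotient.out_eq (Quotient.mk S v))
  have hρeq : ∀ u v, (u = v ∨ (G.Adj u v ∧ red u ∧ red v)) → ρ u = ρ v := fun u v h =>
    congrArg Quotient.out (Quotient.sound (s := S) h)
  have hψ : ∀ c : V, ∃ ψ : G ≃g G, red c → (∀ v, red (ψ v) ↔ red v) ∧ ψ r = c := by
    intro c
    by_cases hc : red c
    · obtain ⟨ψ, h⟩ := hU.exists_map_red hr hc
      exact ⟨ψ, fun _ => h⟩
    · exact ⟨RelIso.refl _, fun h => absurd h hc⟩
  choose ψ hψ using hψ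
  have htwin' : ∀ u v, (u = v ∨ (G.Adj u v ∧ red u ∧ red v)) → ∀ b, ¬ red b →
      (G.Adj u b ↔ G.Adj v b) := by
    rintro u v (rfl | ⟨h, hu, hv⟩) b hb
    · rfl
    · rw [G.adj_comm u, G.adj_comm v]
      exact ⟨htwin b hb u v hu hv h, htwin b hb v u hv hu h.symm⟩
  have hcopy : ∀ c, red c → ∀ i ∈ C, red (ψ c i) ∧
      (c = ψ c i ∨ (G.Adj c (ψ c i) ∧ red c ∧ red (ψ c i))) := by
    rintro c hc i ⟨hi, hir⟩
    have hri : red (ψ c i) := ((hψ c hc).1 i).2 hi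
    refine ⟨hri, ?_⟩
    rcases hir with rfl | hir
    · exact Or.inl (hψ c hc).2.symm
    · refine Or.inr ⟨?_, hc, hri⟩
      have := (ψ c).map_adj_iff.2 hir
      rwa [(hψ c hc).2] at this
  let U : Type := {v : V // ρ v = v}
  let H : SimpleGraph U := G.induce {v | ρ v = v}
  let redH : U → Prop := fun u => red u.1
  let g : {u : U // redH u} × C ⊕ {u : U // ¬ redH u} → V :=
    Sum.elim (fun p => ψ p.1.1.1 p.2.1) (fun b => b.1.1)
  have hrep : ∀ u u' : U, redH u → redH u' → G.Adj u.1 u'.1 → u = u' := by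
    intro u u' hu hu' h
    exact Subtype.ext (u.2.symm.trans ((hρeq _ _ (Or.inr ⟨h, hu, hu'⟩)).trans u'.2))
  have hcopyρ : ∀ (u : U) (_ : redH u) (i : C), ρ (ψ u.1 i.1) = u.1 := fun u hu i =>
    (hρeq _ _ (hcopy u.1 hu i.1 i.2).2).symm.trans u.2
  have hbij : Function.Bijective g := by
    constructor
    · rintro (⟨⟨u, hu⟩, i⟩ | ⟨b, hb⟩) (⟨⟨u', hu'⟩, i'⟩ | ⟨b', hb'⟩) h
      · change ψ u.1 i.1 = ψ u'.1 i'.1 at h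
        have e : u = u' := Subtype.ext <| by
          rw [← hcopyρ u hu i, h, hcopyρ u' hu' i']
        subst e
        have : i = i' := Subtype.ext ((ψ u.1).injective h)
        rw [this]
      · change ψ u.1 i.1 = b'.1 at h
        exact absurd (show red b'.1 from h ▸ (hcopy u.1 hu i.1 i.2).1) hb'
      · change b.1 = ψ u'.1 i'.1 at h
        exact absurd (show red b.1 from h ▸ (hcopy u'.1 hu' i'.1 i'.2).1) hb
      · have : b = b' := Subtype.ext h
        subst this
        rfl
    · intro v
      by_cases hv : red v
      · have hc : red (ρ v) := by
          rcases hρ v with h | h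
          · rwa [h]
          · exact h.2.1
        have hρρ : ρ (ρ v) = ρ v := hρeq _ _ (hρ v)
        refine ⟨Sum.inl (⟨⟨ρ v, hρρ⟩, hc⟩, ⟨(ψ (ρ v)).symm v, ?_, ?_⟩),
          (ψ (ρ v)).apply_symm_apply v⟩
        · exact ((hψ _ hc).1 _).1 (by rwa [RelIso.apply_symm_apply])
        · rcases hρ v with h | h
          · left
            rw [RelIso.symm_apply_eq, (hψ _ hc).2, h]
          · right
            rw [← (ψ (ρ v)).map_adj_iff, RelIso.apply_symm_apply, (hψ _ hc).2]
            exact h.1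
      · have : ρ v = v := (hρ v).resolve_right fun h => hv h.2.2
        exact ⟨Sum.inr ⟨⟨v, this⟩, hv⟩, rfl⟩
  have hadj : ∀ x y, G.Adj (g x) (g y) ↔ (blowUp H redH C).Adj x y := by
    have cross : ∀ (u : U) (_ : redH u) (i : C) (b : U) (_ : ¬ redH b),
        G.Adj (ψ u.1 i.1) b.1 ↔ G.Adj u.1 b.1 := fun u hu i b hb =>
      (htwin' _ _ (hcopy u.1 hu i.1 i.2).2 b.1 hb).symm
    rintro (⟨⟨u, hu⟩, i⟩ | ⟨b, hb⟩) (⟨⟨u', hu'⟩, i'⟩ | ⟨b', hb'⟩)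
    · change G.Adj (ψ u.1 i.1) (ψ u'.1 i'.1) ↔ _
      have hno : ∀ w w' : U, redH w → redH w' → ¬ H.Adj w w' := fun w w' hw hw' h =>
        h.ne (hrep w w' hw hw' h)
      have key : G.Adj (ψ u.1 i.1) (ψ u'.1 i'.1) ↔ u = u' ∧ i ≠ i' := by
        constructor
        · intro h
          have e : u = u' := Subtype.ext <| by
            rw [← hcopyρ u hu i, ← hcopyρ u' hu' i']
            exact hρeq _ _ (Or.inr ⟨h, (hcopy u.1 hu i.1 i.2).1, (hcopy u'.1 hu' i'.1 i'.2).1⟩)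
          subst e
          refine ⟨rfl, ?_⟩
          rintro rfl
          exact h.ne rfl
        · rintro ⟨rfl, hi⟩
          rw [(ψ u.1).map_adj_iff]
          exact (hR.isMaxCliqueIn hr).2.1 i.2 i'.2 fun e => hi (Subtype.ext e)
      rw [key]
      simp only [blowUp, SimpleGraph.fromRel_adj, hno u u' hu hu', hno u' u hu' hu, false_or]
      grind
    · change G.Adj (ψ u.1 i.1) b'.1 ↔ _
      rw [cross u hu i b' hb']
      simp [blowUp, H, G.adj_comm b'.1 u.1]
    · change G.Adj b.1 (ψ u'.1 i'.1) ↔ _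
      rw [G.adj_comm, cross u' hu' i' b hb, G.adj_comm]
      simp [blowUp, H, G.adj_comm b.1 u'.1]
    · change G.Adj b.1 b'.1 ↔ _
      simp only [blowUp, SimpleGraph.fromRel_adj, H, SimpleGraph.comap_adj,
        Function.Embedding.subtype_apply, G.adj_comm b'.1 b.1, or_self]
      refine ⟨fun h => ⟨?_, h⟩, fun h => h.2⟩
      intro e
      cases e
      exact h.ne rfl
  refine ⟨U, H, redH, C, fun u v hu hv h => h.ne (hrep u v hu hv h), ?_,
    Cardinal.mk_le_aleph0, ⟨(Equiv.ofBijective g hbij).symm, ?_⟩, ?_⟩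
  · have := Cardinal.one_lt_iff_nontrivial.1 (hcard C (hR.isMaxCliqueIn hr))
    exact Cardinal.two_le_iff.2 (exists_pair_ne C)
  · intro a b
    rw [← hadj]
    simp only [g, ← Equiv.ofBijective_apply g hbij, Equiv.apply_symm_apply]
  · intro v
    obtain ⟨x, rfl⟩ := hbij.2 v
    change red (g x) ↔ blowUpRed U redH C ((Equiv.ofBijective g hbij).symm (g x))
    rw [Equiv.ofBijective_symm_apply_apply g hbij x]
    rcases x with ⟨⟨u, hu⟩, i⟩ | ⟨b, hb⟩
    · exact iff_of_true (hcopy u.1 hu i.1 i.2).1 trivial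
    · exact iff_of_false hb id

/-- in a basic CUH graph omitting `D` with a non-independent color class,
if ω_R > 1 then every blue vertex has a neighbor and a non-neighbor in every maximal red
clique, and all the induced subgraphs `G[M_R ∪ M_B]` are isomorphic as colored graphs. -/
theorem stmt_8 {V : Type} (G : SimpleGraph V) (red : V → Prop)
    (hG : IsBasicCUH G red)
    (hOmD : ¬ Realizes G red Dgraph Dred)
    (hni : (∃ u v, red u ∧ red v ∧ G.Adj u v) ∨ (∃ u v, ¬ red u ∧ ¬ red v ∧ G.Adj u v))
    (hωR : ∀ M : Set V, IsMaxCliqueIn G {v | red v} M → 1 < Cardinal.mk M) :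
    (∀ b, ¬ red b → ∀ M : Set V, IsMaxCliqueIn G {v | red v} M →
      (∃ u ∈ M, G.Adj b u) ∧ (∃ u ∈ M, ¬ G.Adj b u)) ∧
    (∀ MR MR' MB MB' : Set V, IsMaxCliqueIn G {v | red v} MR →
      IsMaxCliqueIn G {v | red v} MR' → IsMaxCliqueIn G {v | ¬ red v} MB →
      IsMaxCliqueIn G {v | ¬ red v} MB' →
      ∃ e : (G.induce (MR ∪ MB)) ≃g (G.induce (MR' ∪ MB')),
        ∀ x, red x.1 ↔ red (e x).1) := by
  obtain ⟨⟨hcount, -, hU, hR, hB⟩, hnb, ⟨r₀, -, hr₀, -⟩, ⟨b₀, -, hb₀, -⟩⟩ := hG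
  have hmix : ∃ b, ¬ red b ∧ ∃ u v, red u ∧ red v ∧ G.Adj u v ∧ G.Adj b u ∧ ¬ G.Adj b v := by
    by_contra! h
    exact hnb (Or.inl (isBlowUpOf_of_twins hU hR hr₀ hωR h))
  obtain ⟨b₁, hb₁, u, v, hu, hv, huv, hbu, hbv⟩ := hmix
  have hmixed : ∀ b, ¬ red b → ∀ M : Set V, IsMaxCliqueIn G {v | red v} M →
      (∃ u ∈ M, G.Adj b u) ∧ (∃ u ∈ M, ¬ G.Adj b u) := by
    intro b hb M hM
    obtain ⟨r, hrM⟩ := hM.nonempty ⟨r₀, hr₀⟩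
    have hr : red r := hM.1 hrM
    -- moving `(r, b)` to `(w, b₁)`, the preimage of the other end `w'` of a red edge lies in `M`
    have hpull : ∀ w w', red w → red w' → G.Adj w w' → (G.Adj b₁ w ↔ G.Adj b r) →
        ∃ x ∈ M, (G.Adj b x ↔ G.Adj b₁ w') := by
      intro w w' hw hw' hww' hadj
      obtain ⟨ψ, hψ, hψr, hψb⟩ := hU.exists_map_pair hr hw hb hb₁ hadj
      refine ⟨ψ.symm w', (hM.mem_iff hR hrM _).2 ⟨?_, Or.inr ?_⟩, ?_⟩
      · exact (hψ _).1 (by rwa [RelIso.apply_symm_apply])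
      · rwa [← ψ.map_adj_iff, RelIso.apply_symm_apply, hψr]
      · rw [← ψ.map_adj_iff, RelIso.apply_symm_apply, hψb]
    by_cases hbr : G.Adj b r
    · obtain ⟨x, hx, hbx⟩ := hpull u v hu hv huv (by simp [hbu, hbr])
      exact ⟨⟨r, hrM, hbr⟩, x, hx, by rwa [hbx]⟩
    · obtain ⟨x, hx, hbx⟩ := hpull v u hv hu huv.symm (by simp [hbv, hbr])
      exact ⟨⟨x, hx, by rwa [hbx]⟩, r, hrM, hbr⟩
  refine ⟨hmixed, fun MR MR' MB MB' hMR hMR' hMB hMB' => ?_⟩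
  obtain ⟨b, hb⟩ := hMB.nonempty ⟨b₀, hb₀⟩
  obtain ⟨b', hb'⟩ := hMB'.nonempty ⟨b₀, hb₀⟩
  obtain ⟨⟨r, hr, hbr⟩, -⟩ := hmixed b (hMB.1 hb) MR hMR
  obtain ⟨⟨r', hr', hbr'⟩, -⟩ := hmixed b' (hMB'.1 hb') MR' hMR'
  obtain ⟨ψ, hψ, hψr, hψb⟩ := hU.exists_map_pair (hMR.1 hr) (hMR'.1 hr') (hMB.1 hb) (hMB'.1 hb')
    (iff_of_true hbr' hbr)
  have hmem : ∀ x, x ∈ MR ∪ MB ↔ ψ x ∈ MR' ∪ MB' := fun x =>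
    (or_congr (hMR.mem_map_iff hR hMR' ψ hψ hr (hψr ▸ hr') x)
      (hMB.mem_map_iff hB hMB' ψ (fun v => not_congr (hψ v)) hb (hψb ▸ hb') x)).symm
  exact ⟨⟨ψ.toEquiv.subtypeEquiv hmem, ψ.map_adj_iff⟩, fun x => (hψ x.1).symm⟩
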